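/- Every finite solvable non-nilpotent group G satisfies γ_cp(G) ≤ 4·log₂|G|, i.e., G is the setwise product of at most 4·log₂|G| pairwise conjugate proper subgroups. -/

import Mathlib

/-!
A finite non-nilpotent group has a maximal subgroup `M` that is not normal. As `G` is solvable,
some term `D` of its derived series satisfies `D ≰ M` and `[D, D] ≤ M`. Then `D M = G`, and
`[D, G] ≰ M` (otherwise `D` would normalize `M`), so `[D, G] M = G` as well.

The image of `[D, G]` in the abelianization of `D` is generated by the classes of the commutators
`[d, m]` with `d ∈ D`, `m ∈ M`. For fixed `m` the class of `[d, m]` is a homomorphism in `d`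
(`commHom`), so this set of generators is closed under powers. In a finite abelian group, the
subgroup `B` generated by such a set is a product of at most `2 log₂ |B|` two-element sets `{1, w}`
with `w` a generator (`exists_list_cover`): adjoining `c` to a subgroup whose quotient sees `c`
with order `t ≥ 2` costs the sets `{1, c ^ 2 ^ i}` for `i < ⌈log₂ t⌉ ≤ 2 log₂ t`.

Finally `[d, m] = (d m d⁻¹) m⁻¹` lies in the product of two conjugates of `M`, as does `1`, so
each two-element set lifts to a product of two conjugates, and `G` is the product of at most
`4 log₂ |D| + 1` conjugates of `M`. Since `D` is proper, `|D| ≤ |G| / 2` absorbs the `1`.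
-/

open Pointwise

/-- The conjugate subgroup `A ^ g = g⁻¹ A g`. -/
def conjugate {G : Type*} [Group G] (A : Subgroup G) (g : G) : Subgroup G :=
  Subgroup.map (MulAut.conj g⁻¹).toMonoidHom A

/-- Binary expansions: `c ^ j` for `j < 2 ^ s` is a subproduct of the `c ^ 2 ^ i`, `i < s`. -/
lemma pow_mem_prod_pairs {A : Type*} [CommGroup A] (c : A) (s : ℕ) :
    ∀ j < 2 ^ s, c ^ j ∈ (((List.range s).map fun i => c ^ 2 ^ i).map
      fun w => ({1, w} : Set A)).prod := by
  induction s with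
  | zero => intro j hj; simp at hj; simp [hj]
  | succ s ih =>
    intro j hj
    rw [List.range_succ, List.map_append, List.map_append, List.prod_append]
    by_cases h : j < 2 ^ s
    · exact Set.mem_mul.2 ⟨_, ih j h, 1, by simp, by simp⟩
    · rw [pow_succ] at hj
      refine Set.mem_mul.2 ⟨_, ih (j - 2 ^ s) (by omega), c ^ 2 ^ s, by simp, ?_⟩
      rw [← pow_add]; congr 1; omega

/-- Adjoining one element `c ∉ B` to a subgroup `B` of a finite abelian group: the number `s` of
binary digits used is at most twice the base-two logarithm of the growth factor. -/
lemma exists_digits {A : Type*} [CommGroup A] [Finite A] (B : Subgroup A) (c : A) (hc : c ∉ B) :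
    ∃ s : ℕ, 2 ^ s * Nat.card B ^ 2 ≤ Nat.card (B ⊔ Subgroup.zpowers c : Subgroup A) ^ 2 ∧
      ∀ a ∈ B ⊔ Subgroup.zpowers c, ∃ b ∈ B, ∃ j < 2 ^ s, a = b * c ^ j := by
  set q : A ⧸ B := QuotientGroup.mk c with hq
  set t := orderOf q with ht
  have ht0 : 0 < t := orderOf_pos q
  have ht1 : t ≠ 1 := by
    rw [ht, Ne, orderOf_eq_one_iff, hq, QuotientGroup.eq_one_iff]; exact hc
  have hcard : Nat.card B * t ≤ Nat.card (B ⊔ Subgroup.zpowers c : Subgroup A) := by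
    have hinj : Function.Injective
        (fun x : B × Fin t => (⟨x.1 * c ^ (x.2 : ℕ), Subgroup.mul_mem_sup x.1.2
          (Subgroup.pow_mem _ (Subgroup.mem_zpowers c) _)⟩ :
            (B ⊔ Subgroup.zpowers c : Subgroup A))) := by
      rintro ⟨⟨b, hb⟩, i⟩ ⟨⟨b', hb'⟩, j⟩ h
      have h1 : b * c ^ (i : ℕ) = b' * c ^ (j : ℕ) := congrArg Subtype.val h
      have h2 : q ^ (i : ℕ) = q ^ (j : ℕ) := by
        have := congrArg (QuotientGroup.mk : A → A ⧸ B) h1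
        simpa [QuotientGroup.mk_mul, QuotientGroup.mk_pow, (QuotientGroup.eq_one_iff b).2 hb,
          (QuotientGroup.eq_one_iff b').2 hb', ← hq] using this
      have h3 : (i : ℕ) = j := pow_injOn_Iio_orderOf i.2 j.2 h2
      rw [h3] at h1
      have h4 := mul_right_cancel h1
      simp [h4, Fin.ext h3]
    have := Nat.card_le_card_of_injective _ hinj
    simpa [Nat.card_prod] using this
  refine ⟨Nat.clog 2 t, ?_, ?_⟩
  · have h1 : 2 ^ Nat.clog 2 t ≤ t ^ 2 := by
      have h2 := Nat.pow_pred_clog_lt_self (b := 2) (x := t) (by norm_num) (by omega)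
      have h3 : 0 < Nat.clog 2 t := Nat.clog_pos (by norm_num) (by omega)
      obtain ⟨k, hk⟩ := Nat.exists_eq_succ_of_ne_zero h3.ne'
      rw [hk] at h2 ⊢
      simp only [Nat.pred_succ] at h2
      rw [Nat.succ_eq_add_one, pow_succ]
      have : 2 ≤ t := by omega
      nlinarith
    calc 2 ^ Nat.clog 2 t * Nat.card B ^ 2 ≤ t ^ 2 * Nat.card B ^ 2 := by gcongr
      _ = (Nat.card B * t) ^ 2 := by ring
      _ ≤ _ := by gcongr
  · intro a ha
    obtain ⟨b, hb, y, hy, rfl⟩ := Subgroup.mem_sup.1 ha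
    obtain ⟨z, rfl⟩ := Subgroup.mem_zpowers_iff.1 hy
    obtain ⟨j, hj, hjz⟩ : ∃ j < t, q ^ j = q ^ z := by
      classical
      have : q ^ z ∈ Subgroup.zpowers q := Subgroup.zpow_mem _ (Subgroup.mem_zpowers q) z
      rw [mem_zpowers_iff_mem_range_orderOf] at this
      simpa using this
    refine ⟨b * (c ^ z * (c ^ j)⁻¹), B.mul_mem hb ?_, j,
      hj.trans_le (Nat.le_pow_clog (by norm_num) t), by group⟩
    rw [← QuotientGroup.eq_one_iff, QuotientGroup.mk_mul, QuotientGroup.mk_inv,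
      QuotientGroup.mk_zpow, QuotientGroup.mk_pow, ← hq, hjz, mul_inv_cancel]

/-- In a finite abelian group, the subgroup generated by part of a power-closed set `C` is covered
by a product of few two-element sets `{1, w}` with `w ∈ C`. -/
lemma exists_list_cover {A : Type*} [CommGroup A] [Finite A] (C : Set A)
    (hC : ∀ c ∈ C, ∀ k : ℕ, c ^ k ∈ C) (S : Set A) (hS : S ⊆ C) :
    ∃ w : List A, (∀ x ∈ w, x ∈ C) ∧ 2 ^ w.length ≤ Nat.card (Subgroup.closure S) ^ 2 ∧
      ∀ a ∈ Subgroup.closure S, a ∈ (w.map fun w => ({1, w} : Set A)).prod := by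
  induction S, S.toFinite using Set.Finite.induction_on with
  | empty => exact ⟨[], by simp, by simp, by simp⟩
  | @insert c S _ _ ih =>
    obtain ⟨w, hw, hlen, hcov⟩ := ih ((Set.subset_insert c S).trans hS)
    have hcl : Subgroup.closure (insert c S) = Subgroup.closure S ⊔ Subgroup.zpowers c := by
      rw [Set.insert_eq, Subgroup.closure_union, Subgroup.zpowers_eq_closure, sup_comm]
    rw [hcl]
    by_cases hc : c ∈ Subgroup.closure S
    · rw [sup_eq_left.2 (by simpa [Subgroup.zpowers_le] using hc)]
      exact ⟨w, hw, hlen, hcov⟩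
    · obtain ⟨s, hs, hdig⟩ := exists_digits _ c hc
      refine ⟨w ++ (List.range s).map fun i => c ^ 2 ^ i, ?_, ?_, ?_⟩
      · intro x hx
        rcases List.mem_append.1 hx with hx | hx
        · exact hw x hx
        · obtain ⟨i, -, rfl⟩ := List.mem_map.1 hx
          exact hC c (hS (Set.mem_insert c S)) _
      · rw [List.length_append, List.length_map, List.length_range, pow_add, mul_comm]
        exact (Nat.mul_le_mul_left _ hlen).trans hs
      · intro a ha
        obtain ⟨b, hb, j, hj, rfl⟩ := hdig a ha
        rw [List.map_append, List.prod_append]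
        exact Set.mul_mem_mul (hcov b hb) (pow_mem_prod_pairs c s j hj)

/-- For a normal subgroup `D` and `g : G`, the homomorphism `d ↦ [d, g]` from `D` to its
abelianization. -/
def commHom {G : Type*} [Group G] (D : Subgroup G) [D.Normal] (g : G) : D →* Abelianization D :=
  Abelianization.of / Abelianization.of.comp (MulAut.conjNormal g).toMonoidHom

lemma commHom_apply {G : Type*} [Group G] (D : Subgroup G) [D.Normal] (g : G) (d : D) :
    commHom D g d = Abelianization.of (d * (MulAut.conjNormal g d)⁻¹) := by
  simp [commHom, div_eq_mul_inv]

/-- Modulo `[D, D]`, the commutator `[d, g]` depends only on the coset `g D`. -/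
lemma commHom_mul {G : Type*} [Group G] (D : Subgroup G) [D.Normal] (g : G) (x d : D) :
    commHom D (g * x) d = commHom D g d := by
  have : MulAut.conjNormal (g * (x : G)) d = MulAut.conjNormal g (x * d * x⁻¹) := by
    ext; simp [mul_assoc]
  rw [commHom_apply, commHom_apply, this]
  simp [mul_comm]

lemma mem_conjugate {G : Type*} [Group G] (A : Subgroup G) (g x : G) :
    x ∈ conjugate A g ↔ g * x * g⁻¹ ∈ A := by
  constructor
  · rintro ⟨a, ha, rfl⟩
    simpa [mul_assoc] using ha
  · intro h
    exact ⟨_, h, by simp [mul_assoc]⟩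

/-- A product of two-element sets `{1, [d, m]}` in the abelianization of `D` lifts to a product of
twice as many conjugates of `M`. -/
lemma exists_conj_list {G : Type*} [Group G] (M D : Subgroup G) [D.Normal]
    (w : List (Abelianization D)) (hw : ∀ x ∈ w, ∃ m ∈ M, ∃ d : D, commHom D m d = x) :
    ∃ l : List G, l.length = 2 * w.length ∧
      ∀ a ∈ (w.map fun w => ({1, w} : Set (Abelianization D))).prod, ∃ x : D,
        Abelianization.of x = a ∧ (x : G) ∈ (l.map fun g => (conjugate M g : Set G)).prod := by
  induction w with
  | nil => exact ⟨[], by simp, fun a ha => ⟨1, by simpa using ha.symm, by simp⟩⟩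
  | cons y w ih =>
    obtain ⟨l, hl, hcov⟩ := ih fun x hx => hw x (List.mem_cons_of_mem _ hx)
    obtain ⟨m, hm, d, rfl⟩ := hw y List.mem_cons_self
    refine ⟨(d : G)⁻¹ :: 1 :: l, by simp [hl]; ring, ?_⟩
    intro a ha
    rw [List.map_cons, List.prod_cons] at ha
    obtain ⟨u, hu, v, hv, rfl⟩ := Set.mem_mul.1 ha
    obtain ⟨x, rfl, hx⟩ := hcov v hv
    simp only [List.map_cons, List.prod_cons]
    rcases hu with rfl | rfl
    · refine ⟨x, by simp, ?_⟩
      exact Set.mem_mul.2 ⟨1, one_mem _, x, Set.mem_mul.2 ⟨1, one_mem _, x, hx, by simp⟩, by simp⟩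
    · refine ⟨d * (MulAut.conjNormal m d)⁻¹ * x, by rw [commHom_apply, ← map_mul], ?_⟩
      refine Set.mem_mul.2 ⟨d * m * (d : G)⁻¹, ?_, m⁻¹ * x, Set.mem_mul.2 ⟨m⁻¹, ?_, x, hx, rfl⟩, ?_⟩
      · rw [SetLike.mem_coe, mem_conjugate]; simpa [mul_assoc] using hm
      · rw [SetLike.mem_coe, mem_conjugate]; simpa using hm
      · simp [mul_assoc]

/-- If `D M = G`, then `[D, G]` is generated modulo `[D, D]` by the commutators `[d, m]`. -/
lemma of_mem_closure {G : Type*} [Group G] (M D : Subgroup G) [D.Normal] (hMD : M ⊔ D = ⊤)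
    (e : G) (he : e ∈ ⁅D, (⊤ : Subgroup G)⁆) : ∃ x : D, (x : G) = e ∧
      Abelianization.of x ∈ Subgroup.closure {y | ∃ m ∈ M, ∃ d : D, commHom D m d = y} := by
  set K := Subgroup.closure {y | ∃ m ∈ M, ∃ d : D, commHom D m d = y} with hK
  have hle : ⁅D, (⊤ : Subgroup G)⁆ ≤ (K.comap Abelianization.of).map D.subtype := by
    rw [Subgroup.commutator_le]
    intro d hd g _
    have hg : g ∈ M ⊔ D := hMD ▸ Subgroup.mem_top g
    obtain ⟨m, hm, x, hx, rfl⟩ := Subgroup.mem_sup_of_normal_right.1 hg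
    refine ⟨⟨d, hd⟩ * (MulAut.conjNormal (m * x) ⟨d, hd⟩)⁻¹, ?_, ?_⟩
    · rw [SetLike.mem_coe, Subgroup.mem_comap, ← commHom_apply, commHom_mul D m ⟨x, hx⟩]
      exact Subgroup.subset_closure ⟨m, hm, _, rfl⟩
    · simp [commutatorElement_def, mul_assoc]
  obtain ⟨x, hx, rfl⟩ := hle he
  exact ⟨x, rfl, hx⟩

/-- A solvable group with a maximal non-normal subgroup `M` is a product of few conjugates
of `M`. -/
lemma exists_conj_cover {G : Type*} [Group G] [Finite G] (hsolv : Group.IsSolvable G) (M : Subgroup G)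
    (hM : IsCoatom M) (hn : ¬ M.Normal) :
    ∃ l : List G, 2 ^ l.length ≤ Nat.card G ^ 4 ∧
      (l.map fun g => (conjugate M g : Set G)).prod = Set.univ := by
  classical
  obtain ⟨k, hk, hk'⟩ : ∃ k, ¬ derivedSeries G k ≤ M ∧ derivedSeries G (k + 1) ≤ M := by
    have hex : ∃ n, derivedSeries G n ≤ M := by
      obtain ⟨n, hn⟩ := hsolv.solvable
      exact ⟨n, hn ▸ bot_le⟩
    have h0 : Nat.find hex ≠ 0 := by
      intro h
      have := Nat.find_spec hex
      rw [h, derivedSeries_zero] at this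
      exact hM.1 (top_le_iff.1 this)
    obtain ⟨k, hk⟩ := Nat.exists_eq_succ_of_ne_zero h0
    exact ⟨k, Nat.find_min hex (by omega), by simpa [hk] using Nat.find_spec hex⟩
  rw [derivedSeries_succ] at hk'
  set D := derivedSeries G k with hD
  have hDn : D.Normal := derivedSeries_normal G k
  have hMD : M ⊔ D = ⊤ := hM.2 _ (left_lt_sup.2 hk)
  have hE : ¬ ⁅D, (⊤ : Subgroup G)⁆ ≤ M := by
    intro h
    have hDM : D ≤ Subgroup.normalizer (M : Set G) := by
      have key : ∀ d ∈ D, ∀ x ∈ M, d * x * d⁻¹ ∈ M := by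
        intro d hd x hx
        have := M.mul_mem (h (Subgroup.commutator_mem_commutator hd (Subgroup.mem_top x))) hx
        simpa [commutatorElement_def] using this
      intro d hd
      rw [Subgroup.mem_normalizer_iff]
      refine fun x => ⟨key d hd x, fun hx => ?_⟩
      have := key d⁻¹ (D.inv_mem hd) _ hx
      simpa [mul_assoc] using this
    refine hn (Subgroup.normalizer_eq_top_iff.1 (top_le_iff.1 ?_))
    rw [← hMD]
    exact sup_le Subgroup.le_normalizer hDM
  have hME : M ⊔ ⁅D, (⊤ : Subgroup G)⁆ = ⊤ := hM.2 _ (left_lt_sup.2 hE)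
  have hDtop : D ≠ ⊤ := fun h => hE (by simpa only [h] using hk')
  have hcard : 2 * Nat.card D ≤ Nat.card G := by
    have h1 : D.index ≠ 1 := by rwa [Ne, Subgroup.index_eq_one]
    have h2 : D.index ≠ 0 := Subgroup.index_ne_zero_of_finite
    have h3 := D.card_mul_index
    rw [← h3, mul_comm]
    exact Nat.mul_le_mul_left _ (by omega)
  obtain ⟨w, hw, hlen, hcov⟩ := exists_list_cover
    {y | ∃ m ∈ M, ∃ d : D, commHom D m d = y}
    (by rintro _ ⟨m, hm, d, rfl⟩ k; exact ⟨m, hm, d ^ k, map_pow _ _ _⟩) _ subset_rfl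
  obtain ⟨l, hl, hlift⟩ := exists_conj_list M D w hw
  refine ⟨l ++ [1], ?_, ?_⟩
  · have h1 : 2 ^ w.length ≤ Nat.card D ^ 2 := hlen.trans <| Nat.pow_le_pow_left
      ((Subgroup.card_le_card_group _).trans
        (Nat.card_le_card_of_surjective _ (QuotientGroup.mk'_surjective (commutator D)))) 2
    rw [List.length_append, hl, List.length_singleton, pow_succ, mul_comm 2, pow_mul]
    calc (2 ^ w.length) ^ 2 * 2 ≤ (Nat.card D ^ 2) ^ 2 * 2 := by gcongr
      _ ≤ (2 * Nat.card D) ^ 4 := by ring_nf; gcongr; norm_num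
      _ ≤ _ := by gcongr
  · rw [Set.eq_univ_iff_forall]
    intro g
    have hg : g ∈ ⁅D, (⊤ : Subgroup G)⁆ ⊔ M := by rw [sup_comm, hME]; exact Subgroup.mem_top g
    obtain ⟨e, he, m, hm, rfl⟩ := Subgroup.mem_sup_of_normal_left.1 hg
    obtain ⟨y, rfl, hy⟩ := of_mem_closure M D hMD e he
    obtain ⟨x, hxy, hx⟩ := hlift _ (hcov _ hy)
    -- `y` and its lift `x` differ by an element of `[D, D] ≤ M`, absorbed by the last factor.
    have hz : ((x⁻¹ * y : D) : G) ∈ M := by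
      have h1 : x⁻¹ * y ∈ commutator D := by
        rw [← Abelianization.ker_of, MonoidHom.mem_ker, map_mul, map_inv, hxy, inv_mul_cancel]
      apply hk'
      have h2 := Subgroup.mem_map_of_mem D.subtype h1
      rwa [Subgroup.map_subtype_commutator] at h2
    rw [List.map_append, List.prod_append]
    refine Set.mem_mul.2 ⟨x, hx, (x⁻¹ * y : D) * m, ?_, by simp [mul_assoc]⟩
    simp only [List.map_cons, List.map_nil, List.prod_singleton, SetLike.mem_coe, mem_conjugate]
    simpa using M.mul_mem hz hm

theorem stmt_16 (G : Type*) [Group G] [Finite G]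
    (hsolv : IsSolvable G) (hnil : ¬ Group.IsNilpotent G) :
    ∃ l : List (Subgroup G),
      (l.length : ℝ) ≤ 4 * Real.logb 2 (Nat.card G) ∧
      (∀ A ∈ l, A ≠ ⊤) ∧ (∀ A ∈ l, ∀ B ∈ l, ∃ g : G, B = conjugate A g) ∧
      (l.map (fun A => (A : Set G))).prod = Set.univ := by
  obtain ⟨M, hM, hn⟩ : ∃ M : Subgroup G, IsCoatom M ∧ ¬ M.Normal := by
    by_contra! h
    exact hnil ((Group.isNilpotent_of_finite_tfae.out 0 2).2 h)
  obtain ⟨l, hlen, hprod⟩ := exists_conj_cover hsolv M hM hn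
  refine ⟨l.map (conjugate M), ?_, ?_, ?_, ?_⟩
  · rw [List.length_map]
    have hpos : (0 : ℝ) < Nat.card G := by exact_mod_cast Nat.card_pos
    have h1 : (2 : ℝ) ^ (l.length : ℝ) ≤ (Nat.card G : ℝ) ^ 4 := by
      rw [Real.rpow_natCast]; exact_mod_cast hlen
    have h2 := (Real.le_logb_iff_rpow_le one_lt_two (by positivity)).2 h1
    rwa [Real.logb_pow] at h2
  · intro A hA hA'
    obtain ⟨g, -, rfl⟩ := List.mem_map.1 hA
    refine hM.1 (top_le_iff.1 fun x _ => ?_)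
    have : g⁻¹ * x * g ∈ conjugate M g := hA' ▸ Subgroup.mem_top _
    simpa [mem_conjugate, mul_assoc] using this
  · intro A hA B hB
    obtain ⟨g, -, rfl⟩ := List.mem_map.1 hA
    obtain ⟨h, -, rfl⟩ := List.mem_map.1 hB
    refine ⟨g⁻¹ * h, ?_⟩
    ext x
    simp [mem_conjugate, mul_assoc]
  · have hmap : ((l.map (conjugate M)) >>= fun A => pure (A : Set G)) =
        l.map fun g => (conjugate M g : Set G) := by
      simp [← List.map_eq_flatMap, Function.comp_def]
    rw [hmap, List.map_id', hprod]
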